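/- arXiv:2110.04944 — 7 statements merged into one kernel-verified Lean document; each statement's English description precedes it below -/
import Mathlib

section
/- For every positive integer n and all real numbers x and y, Re((x+iy)^n) = 2^{n-1} · ∏_{k=0}^{n-1} ( sin((2k+1)π/(2n))·x − cos((2k+1)π/(2n))·y ). -/
/-!
With `z = x + iy` and `w = x - iy` we have `2 Re(z ^ n) = z ^ n + w ^ n`. Put `α = exp(iπ/n)`, so that
`α ^ n = -1`, and `ζ = exp(2πi/n)`. Factoring `X ^ n - (α w) ^ n` over the roots `ζ ^ k α w` and
evaluating at `z` (`pow_add_pow_eq_prod_exp`) gives `z ^ n + w ^ n = ∏ (z - ζ ^ k α w)`, where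
`ζ ^ k α = exp(2iθ)` for `θ = (2k+1)π/(2n)`. Each real factor `sin θ · x - cos θ · y = Im(exp(iθ) w)`
is `(z - exp(2iθ) w) / 2` times the phase `i exp(-iθ)` (`sin_mul_sub_cos_mul_eq`), and these phases
multiply to `1` because the angles sum to `nπ/2` (`prod_phase_eq_one`).
-/

open Real Finset

theorem pow_add_pow_eq_prod_exp (n : ℕ) (hn : 0 < n) (z w : ℂ) :
    z ^ n + w ^ n = ∏ k ∈ Finset.range n,
      (z - Complex.exp (2 * ((2 * k + 1) * π / (2 * n)) * Complex.I) * w) := by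
  have hn0 : (n : ℂ) ≠ 0 := by exact_mod_cast hn.ne'
  have hα : Complex.exp (π / n * Complex.I) ^ n = -1 := by
    rw [← Complex.exp_nat_mul, ← Complex.exp_pi_mul_I]
    congr 1
    field_simp
  have h := X_pow_sub_C_eq_prod (Complex.isPrimitiveRoot_exp n hn.ne') hn
    (mul_pow (Complex.exp (π / n * Complex.I)) w n)
  have h2 := congrArg (Polynomial.eval z) h
  simp only [Polynomial.eval_sub, Polynomial.eval_pow, Polynomial.eval_X, Polynomial.eval_C,
    Polynomial.eval_prod, hα] at h2
  rw [show z ^ n + w ^ n = z ^ n - -1 * w ^ n by ring, h2]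
  refine Finset.prod_congr rfl fun k _ => ?_
  rw [← mul_assoc, ← Complex.exp_nat_mul, ← Complex.exp_add]
  congr 3
  field_simp

theorem sin_mul_sub_cos_mul_eq (θ x y : ℂ) :
    Complex.sin θ * x - Complex.cos θ * y =
      (1 / 2) * (Complex.I * Complex.exp (-θ * Complex.I)) *
        ((x + y * Complex.I) - Complex.exp (2 * θ * Complex.I) * (x - y * Complex.I)) := by
  have h : Complex.exp (2 * θ * Complex.I) =
      Complex.exp (θ * Complex.I) * Complex.exp (θ * Complex.I) := by
    rw [← Complex.exp_add]; ring_nf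
  have h1 : Complex.exp (-θ * Complex.I) * Complex.exp (θ * Complex.I) = 1 := by
    rw [← Complex.exp_add]; simp
  rw [h, Complex.sin, Complex.cos]
  linear_combination (1 / 2 * Complex.I * Complex.exp (θ * Complex.I) * (x - y * Complex.I)) * h1 -
    (1 / 2 * y * (Complex.exp (-θ * Complex.I) + Complex.exp (θ * Complex.I))) * Complex.I_sq

theorem prod_phase_eq_one (n : ℕ) (hn : 0 < n) :
    ∏ k ∈ Finset.range n,
      (Complex.I * Complex.exp (-((2 * k + 1) * π / (2 * n)) * Complex.I)) = 1 := by
  have hn0 : (n : ℂ) ≠ 0 := by exact_mod_cast hn.ne'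
  -- The sum of the first `m` odd numbers is `m ^ 2`.
  have hs : ∀ m : ℕ, ∑ k ∈ Finset.range m, (2 * (k : ℂ) + 1) = (m : ℂ) ^ 2 := by
    intro m
    induction m with
    | zero => simp
    | succ m ih => rw [Finset.sum_range_succ, ih]; push_cast; ring
  have hsum : ∑ k ∈ Finset.range n, (-((2 * (k : ℂ) + 1) * π / (2 * n)) * Complex.I) =
      n * (-(π / 2 * Complex.I)) := by
    calc _ = (∑ k ∈ Finset.range n, (2 * (k : ℂ) + 1)) * (-(π / (2 * n)) * Complex.I) := by
          rw [Finset.sum_mul]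
          exact Finset.sum_congr rfl fun k _ => by ring
      _ = _ := by rw [hs]; field_simp
  rw [Finset.prod_mul_distrib, ← Complex.exp_sum, hsum, Complex.exp_nat_mul, Complex.exp_neg,
    Complex.exp_pi_div_two_mul_I]
  simp [← mul_pow]

theorem re_pow_eq_prod (n : ℕ) (hn : 0 < n) (x y : ℝ) :
    (((x : ℂ) + y * Complex.I) ^ n).re =
      2 ^ (n - 1) *
        ∏ k ∈ Finset.range n,
          (Real.sin ((2 * k + 1) * Real.pi / (2 * n)) * x -
            Real.cos ((2 * k + 1) * Real.pi / (2 * n)) * y) := by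
  apply Complex.ofReal_injective
  have hw : (starRingEnd ℂ) ((x : ℂ) + y * Complex.I) = x - y * Complex.I := by
    simp [sub_eq_add_neg]
  rw [Complex.re_eq_add_conj, map_pow, hw, pow_add_pow_eq_prod_exp n hn]
  push_cast
  simp_rw [sin_mul_sub_cos_mul_eq]
  rw [Finset.prod_mul_distrib, Finset.prod_mul_distrib, prod_phase_eq_one n hn,
    Finset.prod_const, Finset.card_range]
  obtain ⟨m, rfl⟩ := Nat.exists_eq_add_of_lt hn
  have h2 : (2 : ℂ) ^ m * (1 / 2) ^ m = 1 := by rw [← mul_pow]; norm_num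
  simp only [zero_add, Nat.add_sub_cancel, pow_succ, mul_one, ← mul_assoc, h2]
  ring
end

section
/- For every positive integer n and all real numbers x and y, Im((x+iy)^n) = 2^{n-1} · ∏_{k=1}^{n} ( sin(kπ/n)·x − cos(kπ/n)·y ). -/
/-!
With `z = x + iy`, `w = x - iy` and `ζ = exp (2πi/n)`, the imaginary part in question is
`(z ^ n - w ^ n) / (2i)`, and `z ^ n - w ^ n` factors as `∏ k ∈ [1, n], (z - ζ ^ k w)`.
Each linear factor is, up to the constant `(i/2) exp (-kπi/n)`, the real form
`sin (kπ/n) x - cos (kπ/n) y` (`linear_factor`). The product of `exp (kπi/n)` over `k` is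
`exp ((n+1)πi/2) = i ^ (n+1)` (`prod_sq_pow_succ` with base `exp (πi/(2n))`), so the constants
multiply to `2 ^ (-n) / i`, which accounts for the factor `2 ^ (n-1)`.
-/

open Real Finset

lemma prod_sq_pow_succ (h : ℂ) (m : ℕ) :
    ∏ i ∈ range m, (h ^ 2) ^ (i + 1) = (h ^ m) ^ (m + 1) := by
  induction m with
  | zero => simp
  | succ m ih => rw [prod_range_succ, ih]; ring

/-- After multiplication by `exp (iθ)`, the real linear form vanishing in the direction `θ` is
proportional to `z - exp (2iθ) * conj z`, where `z = x + iy`. -/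
lemma linear_factor (θ x y : ℝ) :
    Complex.exp (θ * Complex.I) * ((Real.sin θ * x - Real.cos θ * y : ℝ) : ℂ) =
      Complex.I / 2 *
        ((x + y * Complex.I) - Complex.exp (θ * Complex.I) ^ 2 * (x - y * Complex.I)) := by
  have hcs := Complex.sin_sq_add_cos_sq (θ : ℂ)
  rw [Complex.exp_mul_I]
  push_cast
  linear_combination (Complex.I / 2 * (x + y * Complex.I)) * hcs +
    (Complex.cos θ * Complex.sin θ * (x - y * Complex.I)
      + Complex.I / 2 * Complex.sin θ ^ 2 * (x - y * Complex.I)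
      - Complex.cos θ ^ 2 * y) * Complex.I_sq

theorem im_pow_eq_prod (n : ℕ) (hn : 0 < n) (x y : ℝ) :
    (((x : ℂ) + y * Complex.I) ^ n).im =
      2 ^ (n - 1) *
        ∏ k ∈ Finset.Icc 1 n,
          (Real.sin (k * Real.pi / n) * x - Real.cos (k * Real.pi / n) * y) := by
  have hn0 : (n : ℂ) ≠ 0 := by exact_mod_cast hn.ne'
  set z : ℂ := x + y * Complex.I with hz
  set w : ℂ := x - y * Complex.I with hw
  -- The half-angle root makes all exponents integral: `exp (πi/n) = h ^ 2`, `ζ = h ^ 4`,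
  -- `h ^ n = i`.
  set h : ℂ := Complex.exp (Real.pi * Complex.I / (2 * n)) with hh
  have hζ : IsPrimitiveRoot (h ^ 4) n := by
    have := Complex.isPrimitiveRoot_exp n hn.ne'
    convert this using 1
    rw [hh, ← Complex.exp_nat_mul]
    congr 1
    push_cast
    field_simp
    ring
  have hhn : h ^ n = Complex.I := by
    rw [hh, ← Complex.exp_nat_mul]
    refine Eq.trans (congrArg Complex.exp ?_) Complex.exp_pi_div_two_mul_I
    field_simp
  have hconj : w = (starRingEnd ℂ) z := by simp [hz, hw, sub_eq_add_neg]
  have him : z ^ n - w ^ n = 2 * Complex.I * ((z ^ n).im : ℂ) := by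
    rw [hconj, ← map_pow, Complex.sub_conj]
    push_cast
    ring
  have hfac : z ^ n - w ^ n = ∏ i ∈ range n, (z - (h ^ 4) ^ (i + 1) * w) := by
    -- The root `ζ * w` of `X ^ n - w ^ n` is chosen to shift the exponents to `1, …, n`.
    have hroot : (h ^ 4 * w) ^ n = w ^ n := by rw [mul_pow, hζ.pow_eq_one, one_mul]
    have := congrArg (Polynomial.eval z) (X_pow_sub_C_eq_prod hζ hn hroot)
    simp only [Polynomial.eval_sub, Polynomial.eval_pow, Polynomial.eval_X, Polynomial.eval_C,
      Polynomial.eval_prod] at this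
    rw [this]
    exact prod_congr rfl fun i _ => by ring
  have hshift (f : ℕ → ℝ) : ∏ k ∈ Icc 1 n, f k = ∏ i ∈ range n, f (i + 1) := by
    rw [range_eq_Ico, prod_Ico_add' f 0 n 1]
    rfl
  rw [hshift]
  set P : ℝ := ∏ i ∈ range n, (Real.sin ((i + 1 : ℕ) * Real.pi / n) * x -
    Real.cos ((i + 1 : ℕ) * Real.pi / n) * y) with hP
  have key : Complex.I ^ (n + 1) * (P : ℂ) = (Complex.I / 2) ^ n * (z ^ n - w ^ n) := by
    have hc : (Complex.I / 2) ^ n = ∏ _i ∈ range n, (Complex.I / 2) := by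
      rw [prod_const, card_range]
    rw [← hhn, ← prod_sq_pow_succ h n, hP, Complex.ofReal_prod, ← prod_mul_distrib, hhn, hfac, hc,
      ← prod_mul_distrib]
    refine prod_congr rfl fun i _ => ?_
    have he : (h ^ 2) ^ (i + 1) =
        Complex.exp (((i + 1 : ℕ) * Real.pi / n : ℝ) * Complex.I) := by
      rw [← pow_mul, hh, ← Complex.exp_nat_mul]
      congr 1
      push_cast
      field_simp
    have he2 : (h ^ 4) ^ (i + 1) =
        Complex.exp (((i + 1 : ℕ) * Real.pi / n : ℝ) * Complex.I) ^ 2 := by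
      rw [← he]; ring
    rw [he, he2]
    exact linear_factor _ x y
  obtain ⟨m, rfl⟩ : ∃ m, n = m + 1 := ⟨n - 1, by omega⟩
  rw [him, div_pow] at key
  have h2 : (2 : ℂ) ^ (m + 1) ≠ 0 := pow_ne_zero _ two_ne_zero
  have hI : Complex.I ^ (m + 1 + 1) ≠ 0 := pow_ne_zero _ Complex.I_ne_zero
  have hfin : ((z ^ (m + 1)).im : ℂ) = 2 ^ m * (P : ℂ) := by
    apply mul_left_cancel₀ hI
    field_simp at key
    linear_combination (-1 / 2 : ℂ) * key
  rw [Nat.add_sub_cancel]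
  exact_mod_cast hfin
end

section
/- For every positive integer n, the product ∏_{k=0}^{n-1} sin((2k+1)π/(2n)) equals 2^{1−n}. -/
/-!
The numbers `exp ((2k+1)πi/n)`, `0 ≤ k < n`, are the roots of `X ^ n + 1`, so evaluating the
factorisation of that polynomial at `1` gives `∏ (1 - exp ((2k+1)πi/n)) = 2`. Taking norms and
using `‖exp (iθ) - 1‖ = 2 |sin (θ/2)|`, where the half-angles all lie in `(0, π)`, turns this into
`2 ^ n * ∏ sin ((2k+1)π/(2n)) = 2`.
-/

open Real Finset

theorem prod_sin_odd_eq (n : ℕ) (hn : 0 < n) :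
    ∏ k ∈ Finset.range n, Real.sin ((2 * k + 1) * Real.pi / (2 * n)) =
      (2 : ℝ) ^ ((1 : ℤ) - n) := by
  have hn0 : (n : ℂ) ≠ 0 := by exact_mod_cast hn.ne'
  have hnR : (0 : ℝ) < n := by exact_mod_cast hn
  have hα : Complex.exp (π * Complex.I / n) ^ n = -1 := by
    rw [← Complex.exp_nat_mul, mul_div_cancel₀ _ hn0, Complex.exp_pi_mul_I]
  have hprod : ∏ k ∈ range n, (1 - Complex.exp (2 * π * Complex.I / n) ^ k *
      Complex.exp (π * Complex.I / n)) = 2 := by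
    have h := congrArg (Polynomial.eval 1)
      (X_pow_sub_C_eq_prod (Complex.isPrimitiveRoot_exp n hn.ne') hn hα)
    simp only [Polynomial.eval_prod, Polynomial.eval_sub, Polynomial.eval_pow,
      Polynomial.eval_X, Polynomial.eval_C, one_pow] at h
    rw [← h]
    norm_num
  have hterm : ∀ k ∈ range n, ‖1 - Complex.exp (2 * π * Complex.I / n) ^ k *
      Complex.exp (π * Complex.I / n)‖ = 2 * Real.sin ((2 * k + 1) * π / (2 * n)) := by
    intro k hk
    have hk' : (k : ℝ) + 1 ≤ n := by exact_mod_cast mem_range.mp hk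
    have hpos : 0 ≤ Real.sin ((2 * k + 1) * π / (2 * n)) := by
      apply Real.sin_nonneg_of_nonneg_of_le_pi (by positivity)
      rw [div_le_iff₀ (by positivity)]
      nlinarith [Real.pi_pos]
    have hexp : Complex.exp (2 * π * Complex.I / n) ^ k * Complex.exp (π * Complex.I / n) =
        Complex.exp (Complex.I * (((2 * k + 1) * π / n : ℝ) : ℂ)) := by
      rw [← Complex.exp_nat_mul, ← Complex.exp_add]
      congr 1
      push_cast
      ring
    have hhalf : (2 * k + 1) * π / n / 2 = (2 * k + 1) * π / (2 * n) := by ring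
    rw [norm_sub_rev, hexp, Complex.norm_exp_I_mul_ofReal_sub_one, hhalf, Real.norm_eq_abs,
      abs_of_nonneg (by positivity)]
  have hnorm := congrArg norm hprod
  rw [norm_prod, prod_congr rfl hterm, prod_mul_distrib, prod_const, card_range,
    Complex.norm_ofNat] at hnorm
  rw [zpow_sub₀ two_ne_zero, zpow_one, zpow_natCast, eq_div_iff (by positivity), mul_comm]
  exact hnorm
end

section
/- For every integer n ≥ 3, the Lebesgue measure (area) of the set {(x,y) ∈ ℝ² : |Im((x+iy)^n)| ≤ 1} equals B(1/2 − 1/n, 1/2), where B denotes the Euler beta function. -/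
/-!
In polar coordinates the form is `r ^ n * sin (n * θ)`, so the region meets the ray of angle `θ` in
a segment and its area is `1 / 2 * ∫ |sin (n * θ)| ^ (-2 / n)` over a full period
(`lintegral_radial`). Multiplication by `n` preserves the measure of the circle, hence `n * θ` may
be replaced by `θ` (`lintegral_abs_sin_nsmul_rpow`). The remaining integral comes from computing
`∫∫ |y| ^ (-s) * exp (-(x ^ 2 + y ^ 2))` in Cartesian and in polar coordinates
(`lintegral_abs_sin_rpow`): the first gives `Γ(1/2 - s/2) Γ(1/2)`, the second
`1/2 Γ(1 - s/2) ∫ |sin θ| ^ (-s)`, and `s = 2 / n` yields the beta function.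

All integrals are taken in `[0, ∞]`, where `0 ^ (-s) = ∞` for `s > 0`; this is the correct value in
the directions `sin (n * θ) = 0`, so no null set has to be removed.
-/

open MeasureTheory

/-- The Euler beta function `B(a, b) = Γ(a) Γ(b) / Γ(a + b)`. -/
noncomputable def eulerBeta (a b : ℝ) : ℝ :=
  Real.Gamma a * Real.Gamma b / Real.Gamma (a + b)

open Set Real

lemma lintegral_Ioi_rpow_mul_exp_neg_sq {q : ℝ} (hq : -1 < q) :
    ∫⁻ x in Ioi (0 : ℝ), ENNReal.ofReal x ^ q * ENNReal.ofReal (exp (-x ^ 2)) =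
      ENNReal.ofReal (1 / 2 * Gamma ((q + 1) / 2)) := by
  rw [← integral_rpow_mul_exp_neg_rpow (p := 2) two_pos hq,
    ofReal_integral_eq_lintegral_ofReal (integrableOn_rpow_mul_exp_neg_rpow hq two_pos)
      ((ae_restrict_iff' measurableSet_Ioi).2 (.of_forall fun x hx =>
        mul_nonneg (rpow_nonneg (le_of_lt hx) _) (exp_pos _).le))]
  refine setLIntegral_congr_fun measurableSet_Ioi fun x hx => ?_
  rw [ENNReal.ofReal_rpow_of_pos hx, ← ENNReal.ofReal_mul (rpow_nonneg (le_of_lt hx) _),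
    rpow_two]

lemma lintegral_abs_rpow_mul_exp_neg_sq {q : ℝ} (hq : -1 < q) :
    ∫⁻ x : ℝ, ENNReal.ofReal |x| ^ q * ENNReal.ofReal (exp (-x ^ 2)) =
      ENNReal.ofReal (Gamma ((q + 1) / 2)) := by
  have hf : Measurable fun x : ℝ => ENNReal.ofReal |x| ^ q * ENNReal.ofReal (exp (-x ^ 2)) := by
    fun_prop
  have hpos : ∫⁻ x in Ioi (0 : ℝ), ENNReal.ofReal |x| ^ q * ENNReal.ofReal (exp (-x ^ 2)) =
      ENNReal.ofReal (1 / 2 * Gamma ((q + 1) / 2)) := by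
    rw [← lintegral_Ioi_rpow_mul_exp_neg_sq hq]
    refine setLIntegral_congr_fun measurableSet_Ioi fun x hx => ?_
    simp only [abs_of_pos (mem_Ioi.1 hx)]
  have hneg : ∫⁻ x in Iic (0 : ℝ), ENNReal.ofReal |x| ^ q * ENNReal.ofReal (exp (-x ^ 2)) =
      ENNReal.ofReal (1 / 2 * Gamma ((q + 1) / 2)) := by
    rw [← hpos, setLIntegral_congr Iio_ae_eq_Iic.symm]
    have := (Measure.measurePreserving_neg (volume : Measure ℝ)).setLIntegral_comp_preimage
      (measurableSet_Ioi (a := (0 : ℝ))) hf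
    simpa [Pi.neg_def] using this
  have hΓ : 0 ≤ 1 / 2 * Gamma ((q + 1) / 2) := by
    have := Gamma_pos_of_pos (s := (q + 1) / 2) (by linarith)
    positivity
  rw [← lintegral_add_compl _ (measurableSet_Ioi (a := (0 : ℝ))), compl_Ioi, hpos, hneg,
    ← ENNReal.ofReal_add hΓ hΓ]
  congr 1; ring

/-- Integrating `|y| ^ (-s) * exp (-(x ^ 2 + y ^ 2))` over the plane, once in Cartesian and once in
polar coordinates, evaluates `∫ |sin θ| ^ (-s)` over a full period. -/
lemma lintegral_abs_sin_rpow {s : ℝ} (hs1 : s < 1) :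
    ENNReal.ofReal (1 / 2 * Gamma (1 - s / 2)) *
      ∫⁻ θ in Ioo (-π) π, ENNReal.ofReal |sin θ| ^ (-s) =
    ENNReal.ofReal (Gamma (1 / 2 - s / 2) * Gamma (1 / 2)) := by
  have hcart : ∫⁻ p : ℝ × ℝ, ENNReal.ofReal (exp (-p.1 ^ 2)) *
      (ENNReal.ofReal |p.2| ^ (-s) * ENNReal.ofReal (exp (-p.2 ^ 2))) =
      ENNReal.ofReal (Gamma (1 / 2 - s / 2) * Gamma (1 / 2)) := by
    rw [Measure.volume_eq_prod, lintegral_prod_mul (f := fun x => ENNReal.ofReal (exp (-x ^ 2)))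
      (g := fun y => ENNReal.ofReal |y| ^ (-s) * ENNReal.ofReal (exp (-y ^ 2)))
      (by fun_prop) (by fun_prop)]
    have h0 := lintegral_abs_rpow_mul_exp_neg_sq (q := 0) (by norm_num)
    simp only [ENNReal.rpow_zero, one_mul, zero_add] at h0
    rw [h0, lintegral_abs_rpow_mul_exp_neg_sq (by linarith), mul_comm,
      ← ENNReal.ofReal_mul (Gamma_pos_of_pos (by linarith)).le]
    congr 3; ring
  have hrad : ∫⁻ r in Ioi (0 : ℝ), ENNReal.ofReal r ^ (1 - s) * ENNReal.ofReal (exp (-r ^ 2)) =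
      ENNReal.ofReal (1 / 2 * Gamma (1 - s / 2)) := by
    rw [lintegral_Ioi_rpow_mul_exp_neg_sq (by linarith)]
    congr 3; ring
  rw [← hcart, ← hrad, ← lintegral_comp_polarCoord_symm, polarCoord_target,
    ← lintegral_prod_mul (by fun_prop) (by fun_prop), Measure.prod_restrict,
    ← Measure.volume_eq_prod]
  refine setLIntegral_congr_fun (measurableSet_Ioi.prod measurableSet_Ioo) ?_
  rintro ⟨r, θ⟩ ⟨hr, -⟩
  simp only [mem_Ioi] at hr
  simp only [polarCoord_symm_apply, smul_eq_mul]
  have hr0 : ENNReal.ofReal r ≠ 0 := by simpa using hr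
  have he : exp (-r ^ 2) = exp (-(r * cos θ) ^ 2) * exp (-(r * sin θ) ^ 2) := by
    rw [← exp_add]
    congr 1
    linear_combination (-r ^ 2) * (-(sin_sq_add_cos_sq θ))
  rw [abs_mul, abs_of_pos hr, ENNReal.ofReal_mul hr.le,
    ENNReal.mul_rpow_of_ne_top ENNReal.ofReal_ne_top ENNReal.ofReal_ne_top, he,
    ENNReal.ofReal_mul (exp_pos _).le, sub_eq_add_neg,
    ENNReal.rpow_add _ _ hr0 ENNReal.ofReal_ne_top, ENNReal.rpow_one]
  ring

/-- Multiplication by `n` preserves Haar measure on the circle, so replacing `θ` by `n * θ` does not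
change the integral over a full period. -/
lemma lintegral_abs_sin_nsmul_rpow {n : ℕ} (hn : 1 < n) (s : ℝ) :
    ∫⁻ θ in Ioo (-π) π, ENNReal.ofReal |sin (n * θ)| ^ (-s) =
      ∫⁻ θ in Ioo (-π) π, ENNReal.ofReal |sin θ| ^ (-s) := by
  have : Fact (0 < 2 * π) := ⟨two_pi_pos⟩
  let F : AddCircle (2 * π) → ENNReal := fun x => ENNReal.ofReal |Real.Angle.sin x| ^ (-s)
  have hcont : Continuous fun x : AddCircle (2 * π) => Real.Angle.sin x :=
    Real.Angle.continuous_sin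
  have hsin := hcont.measurable
  have hF : Measurable F := by
    have : Measurable fun y : ℝ => ENNReal.ofReal |y| ^ (-s) := by fun_prop
    exact this.comp hsin
  have hIoc (f : ℝ → ENNReal) :
      ∫⁻ θ in Ioo (-π) π, f θ = ∫⁻ θ in Ioc (-π) (-π + 2 * π), f θ := by
    rw [setLIntegral_congr Ioo_ae_eq_Ioc, show -π + 2 * π = π by ring]
  rw [hIoc, hIoc]
  calc _ = ∫⁻ θ in Ioc (-π) (-π + 2 * π), F (n • (θ : AddCircle (2 * π))) := by
        refine lintegral_congr fun θ => ?_
        rw [← AddCircle.coe_nsmul, nsmul_eq_mul]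
        rfl
    _ = ∫⁻ x : AddCircle (2 * π), F (n • x) :=
        AddCircle.lintegral_preimage (2 * π) (-π) fun x => F (n • x)
    _ = ∫⁻ x : AddCircle (2 * π), F x :=
        (AddCircle.ergodic_nsmul hn).toMeasurePreserving.lintegral_comp hF
    _ = _ := (AddCircle.lintegral_preimage (2 * π) (-π) F).symm

lemma lintegral_Ioc_id {R : ℝ} (hR : 0 ≤ R) :
    ∫⁻ r in Ioc 0 R, ENNReal.ofReal r = ENNReal.ofReal (R ^ 2 / 2) := by
  rw [← ofReal_integral_eq_lintegral_ofReal, ← intervalIntegral.integral_of_le hR, integral_id]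
  · simp
  · exact (intervalIntegrable_iff_integrableOn_Ioc_of_le hR).1 intervalIntegral.intervalIntegrable_id
  · exact (ae_restrict_iff' measurableSet_Ioc).2 (.of_forall fun x hx => hx.1.le)

/-- The radial integral in a direction where the form equals `r ^ n * (±c)`. For `c = 0` both sides
are infinite. -/
lemma lintegral_radial {n : ℕ} (hn : 0 < n) {c : ℝ} (hc : 0 ≤ c) :
    ∫⁻ r in Ioi (0 : ℝ), ENNReal.ofReal r * {r : ℝ | r ^ n * c ≤ 1}.indicator 1 r =
      ENNReal.ofReal (1 / 2) * ENNReal.ofReal c ^ (-(2 / n : ℝ)) := by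
  have hn' : (0 : ℝ) < n := by exact_mod_cast hn
  have hmeas : MeasurableSet {r : ℝ | r ^ n * c ≤ 1} :=
    measurableSet_le (by fun_prop) measurable_const
  rcases hc.eq_or_lt with rfl | hc
  · have h2 : -(2 / n : ℝ) < 0 := neg_neg_of_pos (by positivity)
    rw [ENNReal.ofReal_zero, ENNReal.zero_rpow_of_neg h2, ENNReal.mul_top (by simp)]
    refine top_unique ?_
    calc (⊤ : ENNReal) = ∫⁻ r in Ioi (1 : ℝ), 1 := by simp
      _ ≤ ∫⁻ r in Ioi (1 : ℝ), ENNReal.ofReal r * {r : ℝ | r ^ n * 0 ≤ 1}.indicator 1 r := by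
        refine setLIntegral_mono' measurableSet_Ioi fun r hr => ?_
        simpa using le_of_lt (mem_Ioi.1 hr)
      _ ≤ _ := lintegral_mono_set (Ioi_subset_Ioi zero_le_one)
  · set R : ℝ := (c⁻¹) ^ (n : ℝ)⁻¹ with hR
    have hR0 : 0 ≤ R := rpow_nonneg (by positivity) _
    have hset : Ioi (0 : ℝ) ∩ {r : ℝ | r ^ n * c ≤ 1} = Ioc 0 R := by
      ext r
      simp only [mem_inter_iff, mem_Ioi, mem_ofPred_eq, mem_Ioc]
      refine and_congr_right fun hr => ?_
      rw [hR, Real.le_rpow_inv_iff_of_pos hr.le (by positivity) hn', rpow_natCast,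
        ← le_div_iff₀ hc, one_div]
    calc _ = ∫⁻ r in Ioi (0 : ℝ), {r : ℝ | r ^ n * c ≤ 1}.indicator ENNReal.ofReal r := by
          refine lintegral_congr fun r => ?_
          by_cases h : r ∈ {r : ℝ | r ^ n * c ≤ 1} <;> simp only [indicator_of_mem,
            indicator_of_notMem, h, not_false_eq_true, Pi.one_apply, mul_one, mul_zero]
      _ = ∫⁻ r in Ioc 0 R, ENNReal.ofReal r := by
          rw [setLIntegral_indicator hmeas, inter_comm, hset]
      _ = _ := by
          rw [lintegral_Ioc_id hR0, ENNReal.ofReal_rpow_of_pos hc,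
            ← ENNReal.ofReal_mul (by norm_num)]
          congr 1
          rw [hR, ← rpow_two, ← rpow_mul (by positivity), inv_rpow hc.le, rpow_neg hc.le,
            mul_comm (n : ℝ)⁻¹, ← div_eq_mul_inv]
          ring

theorem area_fundamental_region_In (n : ℕ) (hn : 3 ≤ n) :
    volume {p : ℝ × ℝ | |(((p.1 : ℂ) + p.2 * Complex.I) ^ n).im| ≤ 1} =
      ENNReal.ofReal (eulerBeta (1 / 2 - 1 / n) (1 / 2)) := by
  have hn3 : (3 : ℝ) ≤ n := by exact_mod_cast hn
  set S := {p : ℝ × ℝ | |(((p.1 : ℂ) + p.2 * Complex.I) ^ n).im| ≤ 1} with hS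
  have hSm : MeasurableSet S := measurableSet_le (by fun_prop) measurable_const
  have hpolar (r θ : ℝ) (hr : 0 < r) :
      polarCoord.symm (r, θ) ∈ S ↔ r ^ n * |sin (n * θ)| ≤ 1 := by
    have : (((r * cos θ : ℝ) : ℂ) + ((r * sin θ : ℝ) : ℂ) * Complex.I) ^ n =
        ((r ^ n * cos (n * θ) : ℝ) : ℂ) + ((r ^ n * sin (n * θ) : ℝ) : ℂ) * Complex.I := by
      have h := Complex.cos_add_sin_mul_I_pow n θ
      push_cast
      rw [show (r : ℂ) * Complex.cos θ + r * Complex.sin θ * Complex.I =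
        r * (Complex.cos θ + Complex.sin θ * Complex.I) by ring, mul_pow, h]
      ring
    simp only [hS, polarCoord_symm_apply, mem_ofPred_eq]
    rw [this, Complex.add_im, Complex.ofReal_im, Complex.im_ofReal_mul, Complex.I_im, mul_one,
      zero_add, abs_mul, abs_of_pos (pow_pos hr n)]
  have harea : volume S =
      ENNReal.ofReal (1 / 2) * ∫⁻ θ in Ioo (-π) π, ENNReal.ofReal |sin θ| ^ (-(2 / n : ℝ)) := by
    rw [← lintegral_indicator_one hSm, ← lintegral_comp_polarCoord_symm, polarCoord_target,
      Measure.volume_eq_prod, setLIntegral_prod_symm, ← lintegral_abs_sin_nsmul_rpow (n := n) (by omega),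
      ← lintegral_const_mul _ (by fun_prop)]
    · refine lintegral_congr fun θ => ?_
      rw [← lintegral_radial (n := n) (by omega) (abs_nonneg _)]
      refine setLIntegral_congr_fun measurableSet_Ioi fun r hr => ?_
      simp only [smul_eq_mul]
      congr 1
      simp only [indicator, hpolar r θ hr, mem_ofPred_eq, Pi.one_apply]
    · have : Measurable fun p : ℝ × ℝ => polarCoord.symm p := by
        simp only [polarCoord_symm_apply]; fun_prop
      exact ((by fun_prop : Measurable fun p : ℝ × ℝ => ENNReal.ofReal p.1).smul
        ((measurable_one.indicator hSm).comp this)).aemeasurable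
  have hs : (2 : ℝ) / n < 1 := by rw [div_lt_one (by linarith)]; linarith
  have hJ := lintegral_abs_sin_rpow hs
  have hΓ : 0 < Gamma (1 - 2 / n / 2) := Gamma_pos_of_pos (by linarith)
  rw [mul_comm (1 / 2 : ℝ), ENNReal.ofReal_mul hΓ.le, mul_assoc, ← harea] at hJ
  rw [eulerBeta, show 1 / 2 - 1 / (n : ℝ) + 1 / 2 = 1 - 2 / n / 2 by ring,
    show 1 / 2 - 1 / (n : ℝ) = 1 / 2 - 2 / n / 2 by ring, ENNReal.ofReal_div_of_pos hΓ,
    ENNReal.eq_div_iff (by simpa using hΓ) ENNReal.ofReal_ne_top, hJ]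
end

section
/- Let n ≥ 3 be an odd integer. Then the group Aut I_n of rational 2×2 matrices A = [[a,b],[c,d]] such that I_n(ax+by, cx+dy) = I_n(x,y) for all real x, y consists exactly of the two matrices [[1,0],[0,1]] and [[−1,0],[0,1]]; and the group Aut |I_n| of rational 2×2 matrices A such that I_n(ax+by, cx+dy) = ±I_n(x,y) for all real x, y consists exactly of the four matrices [[±1,0],[0,±1]]. -/
/-!
In the coordinates `z = x + iy`, `w = x - iy` one has `2i I_n = z ^ n - w ^ n`, and a real matrix acts
by `z ↦ α z + β w`, `w ↦ β̄ z + ᾱ w` with `2α = (a + d) + i(c - b)`, `2β = (a - d) + i(c + b)`.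
With `t = z / w`, invariance up to the sign `ε` becomes the polynomial identity
`(α t + β) ^ n - (β̄ t + ᾱ) ^ n = ε (t ^ n - 1)`. Since `n ≥ 3`, the coefficients of `t` and `t ^ 2`
on the right vanish; if `αβ ≠ 0`, dividing these two relations gives `|α| = |β|`, whence
`α ^ n = β̄ ^ n`, against the leading coefficient `ε ≠ 0`. So `α = 0` or `β = 0`, and the other one is
a Gaussian rational whose `n`-th power is `±1`. Twice the real and imaginary parts of such a number
are rational algebraic integers with squares summing to `4`, so it is `±1` or `±i`, and the last is
excluded as `n` is odd (`gaussian_root`). Hence `A` is diagonal with entries `±1` and lower entry `ε`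
(`entries_of_invariant`).
-/

open Polynomial in
theorem coeff_linear_pow (α β : ℂ) (n k : ℕ) :
    ((C α * X + C β) ^ n).coeff k = β ^ (n - k) * n.choose k * α ^ k := by
  have h : (C α * X + C β) ^ n = ((X + C β) ^ n).comp (C α * X) := by simp
  rw [h, comp_C_mul_X_coeff, coeff_X_add_C_pow]

theorem rat_isIntegral {r : ℚ} (h : IsIntegral ℤ (r : ℂ)) : ∃ m : ℤ, r = m := by
  have h' : IsIntegral ℤ r := by
    rw [← isIntegral_algebraMap_iff (B := ℂ) (algebraMap ℚ ℂ).injective]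
    simpa using h
  obtain ⟨m, hm⟩ := IsIntegrallyClosed.isIntegral_iff.1 h'
  exact ⟨m, by simpa using hm.symm⟩

/-- The only roots of unity of order dividing `2n`, with `n` odd, in `ℚ(i)` are `±1`. -/
theorem gaussian_root {n : ℕ} (hodd : Odd n) {p q ε : ℚ} (hε : ε = 1 ∨ ε = -1)
    (h : ((p : ℂ) + q * Complex.I) ^ n = ε) : p = ε ∧ q = 0 := by
  have hn : 0 < n := hodd.pos
  have hI := Complex.I_sq
  have h2 : ((p : ℂ) - q * Complex.I) ^ n = ε := by
    have := congrArg (starRingEnd ℂ) h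
    simpa [← sub_eq_add_neg] using this
  have hεint : IsIntegral ℤ (ε : ℂ) := by
    rcases hε with rfl | rfl
    · simpa using isIntegral_one
    · simpa using isIntegral_one.neg
  have i1 : IsIntegral ℤ ((p : ℂ) + q * Complex.I) := .of_pow hn (h ▸ hεint)
  have i2 : IsIntegral ℤ ((p : ℂ) - q * Complex.I) := .of_pow hn (h2 ▸ hεint)
  have iI : IsIntegral ℤ Complex.I := .of_pow (n := 2) (by norm_num) (by
    rw [hI]; exact isIntegral_one.neg)
  obtain ⟨u, hu⟩ := rat_isIntegral (r := 2 * p) (by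
    have e : ((2 * p : ℚ) : ℂ) = (p + q * Complex.I) + (p - q * Complex.I) := by push_cast; ring
    exact e ▸ i1.add i2)
  obtain ⟨v, hv⟩ := rat_isIntegral (r := 2 * q) (by
    have e : ((2 * q : ℚ) : ℂ)
        = Complex.I * ((p - q * Complex.I) - (p + q * Complex.I)) := by
      push_cast; linear_combination 2 * (q : ℂ) * hI
    exact e ▸ iI.mul (i2.sub i1))
  have hnorm : p ^ 2 + q ^ 2 = 1 := by
    have e : ((p ^ 2 + q ^ 2 : ℚ) : ℂ) ^ n = 1 := by
      have : ((p ^ 2 + q ^ 2 : ℚ) : ℂ)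
          = ((p : ℂ) + q * Complex.I) * ((p : ℂ) - q * Complex.I) := by
        push_cast; linear_combination (q : ℂ) ^ 2 * hI
      rw [this, mul_pow, h, h2]
      rcases hε with rfl | rfl <;> norm_num
    have e' : (p ^ 2 + q ^ 2) ^ n = 1 := by exact_mod_cast e
    exact (pow_eq_one_iff_of_nonneg (by positivity) hn.ne').1 e'
  have huv : u ^ 2 + v ^ 2 = 4 := by
    have : (u : ℚ) ^ 2 + (v : ℚ) ^ 2 = 4 := by rw [← hu, ← hv]; linarith
    exact_mod_cast this
  have hpq : p = 0 ∨ q = 0 := by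
    have b1 : -2 ≤ u := by nlinarith [sq_nonneg v]
    have b2 : u ≤ 2 := by nlinarith [sq_nonneg v]
    have b3 : -2 ≤ v := by nlinarith [sq_nonneg u]
    have b4 : v ≤ 2 := by nlinarith [sq_nonneg u]
    have : u = 0 ∨ v = 0 := by
      interval_cases u <;> interval_cases v <;> simp_all
    rcases this with rfl | rfl
    · left; simpa using hu
    · right; simpa using hv
  rcases hpq with rfl | rfl
  · -- Here the number is `±i`, whose square is `-1`, while `ε ^ 2 = 1`.
    exfalso
    have hq : (q : ℂ) ^ 2 = 1 := by
      have : q ^ 2 = 1 := by linarith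
      exact_mod_cast this
    have e : (((0 : ℚ) : ℂ) + q * Complex.I) ^ (2 * n) = 1 := by
      rw [mul_comm 2 n, pow_mul, h]
      rcases hε with rfl | rfl <;> norm_num
    have e2 : (((0 : ℚ) : ℂ) + q * Complex.I) ^ 2 = -1 := by
      push_cast; linear_combination (-1 : ℂ) * hq + (q : ℂ) ^ 2 * hI
    rw [pow_mul, e2, hodd.neg_one_pow] at e
    norm_num at e
  · refine ⟨?_, rfl⟩
    have hp : p ^ n = ε := by
      have : (p : ℂ) ^ n = ε := by simpa using h
      exact_mod_cast this
    have : p ^ n = ε ^ n := by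
      rw [hp]; rcases hε with rfl | rfl
      · simp
      · rw [hodd.neg_one_pow]
    exact hodd.pow_injective this

/-- The relations between coefficients expressing that `(z, w) ↦ (α z + β w, β̄ z + ᾱ w)` preserves
`z ^ n - w ^ n` up to the factor `ε` force the substitution to be diagonal or antidiagonal. -/
theorem mul_eq_zero_of_identity {n : ℕ} (hn : 3 ≤ n) {α β α' β' ε : ℂ} (hε : ε ≠ 0)
    (hα : α' = starRingEnd ℂ α) (hβ : β' = starRingEnd ℂ β)
    (h0 : α ^ n - β' ^ n = ε)
    (hk : ∀ k, 1 ≤ k → k < n → β ^ (n - k) * α ^ k = α' ^ (n - k) * β' ^ k) :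
    α = 0 ∨ β = 0 := by
  by_contra! hne
  obtain ⟨ha, hb⟩ := hne
  have ha' : α' ≠ 0 := by simpa [hα] using ha
  have hb' : β' ≠ 0 := by simpa [hβ] using hb
  obtain ⟨m, rfl⟩ : ∃ m, n = m + 3 := ⟨n - 3, by omega⟩
  have h1 := hk 1 le_rfl (by omega)
  have h2 := hk 2 (by omega) (by omega)
  rw [show m + 3 - 1 = m + 2 by omega] at h1
  rw [show m + 3 - 2 = m + 1 by omega] at h2
  have hdet : α * α' = β * β' := by
    have hnz' : α' ^ (m + 1) * β' ≠ 0 := mul_ne_zero (pow_ne_zero _ ha') hb'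
    have hnz : β ^ (m + 1) * α ≠ 0 := mul_ne_zero (pow_ne_zero _ hb) ha
    -- The quotient of the two relations, with denominators cleared.
    apply mul_left_cancel₀ (mul_ne_zero hnz hnz')
    linear_combination α' ^ (m + 2) * β' * h2 - α' ^ (m + 1) * β' ^ 2 * h1
  have hpow : β ^ (m + 3) = α' ^ (m + 3) := by
    apply mul_left_cancel₀ ha
    linear_combination β * h1 - α' ^ (m + 2) * hdet
  have hpow' : β' ^ (m + 3) = α ^ (m + 3) := by
    have := congrArg (starRingEnd ℂ) hpow
    simpa [hα, hβ] using this
  exact hε (by rw [← h0, hpow', sub_self])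

theorem two_I_mul_im (z : ℂ) : 2 * Complex.I * (z.im : ℂ) = z - starRingEnd ℂ z := by
  rw [Complex.sub_conj]; push_cast; ring

/-- The invariance of `I_n` up to the sign `ε`, as a polynomial identity in `t = z / w`. -/
theorem poly_identity {n : ℕ} {a b c d ε : ℝ} {α β : ℂ}
    (hα : α = ((a + d : ℝ) + (c - b : ℝ) * Complex.I) / 2)
    (hβ : β = ((a - d : ℝ) + (c + b : ℝ) * Complex.I) / 2)
    (h : ∀ x y : ℝ, ((((a * x + b * y : ℝ) : ℂ) + ((c * x + d * y : ℝ) : ℂ) * Complex.I) ^ n).im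
      = ε * (((x : ℂ) + y * Complex.I) ^ n).im) :
    (Polynomial.C α * Polynomial.X + Polynomial.C β) ^ n
      - (Polynomial.C (starRingEnd ℂ β) * Polynomial.X + Polynomial.C (starRingEnd ℂ α)) ^ n
      = Polynomial.C (ε : ℂ) * (Polynomial.X ^ n - 1) := by
  have hI := Complex.I_sq
  have hw : ∀ x : ℝ, (x : ℂ) - Complex.I ≠ 0 := fun x hx => by
    simpa using congrArg Complex.im hx
  -- The points `(x + i) / (x - i)`, for real `x`, form an infinite set.
  have hinj : Function.Injective fun x : ℝ => ((x : ℂ) + Complex.I) / (x - Complex.I) := by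
    intro x y hxy
    simp only at hxy
    rw [div_eq_div_iff (hw x) (hw y)] at hxy
    have : 2 * Complex.I * ((x : ℂ) - y) = 0 := by linear_combination -hxy
    have : (x : ℂ) - y = 0 := by simpa using this
    exact_mod_cast sub_eq_zero.1 this
  refine Polynomial.eq_of_infinite_eval_eq _ _
    ((Set.infinite_range_of_injective hinj).mono ?_)
  rintro _ ⟨x, rfl⟩
  have e := congrArg (fun r : ℝ => 2 * Complex.I * (r : ℂ)) (h x 1)
  simp only [Complex.ofReal_mul] at e
  rw [mul_left_comm, two_I_mul_im, two_I_mul_im] at e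
  simp only [map_pow] at e
  have hz : ((a * x + b * 1 : ℝ) : ℂ) + ((c * x + d * 1 : ℝ) : ℂ) * Complex.I
      = α * (x + Complex.I) + β * (x - Complex.I) := by
    rw [hα, hβ]; push_cast; linear_combination (b : ℂ) * hI
  rw [hz] at e
  simp only [map_add, map_sub, map_mul, Complex.conj_ofReal, Complex.conj_I, Complex.ofReal_one,
    one_mul, sub_neg_eq_add, ← sub_eq_add_neg] at e
  have hw' := hw x
  have hwn := pow_ne_zero n hw'
  have key : ∀ r s : ℂ, r * ((x + Complex.I) / (x - Complex.I)) + s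
      = (r * (x + Complex.I) + s * (x - Complex.I)) / (x - Complex.I) := fun r s => by
    field_simp
  simp only [Set.mem_ofPred_eq, Polynomial.eval_sub, Polynomial.eval_pow, Polynomial.eval_add,
    Polynomial.eval_mul, Polynomial.eval_C, Polynomial.eval_X, Polynomial.eval_one, key, div_pow]
  field_simp
  linear_combination e

/-- A rational matrix with `I_n ∘ A = ε I_n` is diagonal with entries `±1`, the lower one being `ε`. -/
theorem entries_of_invariant {n : ℕ} (hn : 3 ≤ n) (hodd : Odd n) {a b c d ε : ℚ}
    (hε : ε = 1 ∨ ε = -1)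
    (h : ∀ x y : ℝ, (((((a : ℝ) * x + (b : ℝ) * y : ℝ) : ℂ)
        + (((c : ℝ) * x + (d : ℝ) * y : ℝ) : ℂ) * Complex.I) ^ n).im
      = (ε : ℝ) * (((x : ℂ) + y * Complex.I) ^ n).im) :
    (a = 1 ∨ a = -1) ∧ b = 0 ∧ c = 0 ∧ d = ε := by
  obtain ⟨α, hα⟩ : ∃ α : ℂ, α = (((a : ℝ) + (d : ℝ) : ℝ) + ((c : ℝ) - (b : ℝ) : ℝ) * Complex.I) / 2 :=
    ⟨_, rfl⟩
  obtain ⟨β, hβ⟩ : ∃ β : ℂ, β = (((a : ℝ) - (d : ℝ) : ℝ) + ((c : ℝ) + (b : ℝ) : ℝ) * Complex.I) / 2 :=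
    ⟨_, rfl⟩
  have P := poly_identity hα hβ h
  have hc : ∀ k, β ^ (n - k) * n.choose k * α ^ k
      - (starRingEnd ℂ α) ^ (n - k) * n.choose k * (starRingEnd ℂ β) ^ k
      = ε * ((if k = n then 1 else 0) - (if k = 0 then 1 else 0)) := fun k => by
    have := congrArg (fun p => Polynomial.coeff p k) P
    simpa [coeff_linear_pow, Polynomial.coeff_X_pow, Polynomial.coeff_one] using this
  have h0 : α ^ n - (starRingEnd ℂ β) ^ n = ε := by
    have := hc n
    simpa [show n ≠ 0 by omega] using this
  have hε0 : (ε : ℂ) ≠ 0 := by rcases hε with rfl | rfl <;> norm_num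
  have hor := mul_eq_zero_of_identity hn hε0 rfl rfl h0 (fun k h1 hkn => by
    have := hc k
    rw [if_neg (by omega), if_neg (by omega)] at this
    have hch : (n.choose k : ℂ) ≠ 0 := by exact_mod_cast (Nat.choose_pos hkn.le).ne'
    apply mul_left_cancel₀ hch
    linear_combination this)
  have hn0 : n ≠ 0 := by omega
  rcases hor with h' | h'
  · rw [h'] at hα h0
    have hre := congrArg Complex.re hα
    have him := congrArg Complex.im hα
    simp at hre him
    have e1 : a + d = 0 := by
      have : ((a + d : ℚ) : ℝ) = 0 := by push_cast; linarith
      exact_mod_cast this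
    have e2 : c - b = 0 := by
      have : ((c - b : ℚ) : ℝ) = 0 := by push_cast; linarith
      exact_mod_cast this
    have hβ' : β = (a : ℂ) + b * Complex.I := by
      rw [hβ, show d = -a by linarith, show c = b by linarith]; push_cast; ring
    have hr : ((a : ℂ) + (b : ℚ) * Complex.I) ^ n = (-ε : ℚ) := by
      rw [zero_pow hn0] at h0
      have := congrArg (starRingEnd ℂ) h0
      simp at this
      rw [← hβ']; push_cast; linear_combination -this
    obtain ⟨r1, r2⟩ := gaussian_root hodd (by rcases hε with rfl | rfl <;> simp) hr
    refine ⟨?_, r2, by linarith, by linarith⟩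
    rcases hε with rfl | rfl <;> simp [r1]
  · rw [h'] at hβ h0
    have hre := congrArg Complex.re hβ
    have him := congrArg Complex.im hβ
    simp at hre him
    have e1 : a - d = 0 := by
      have : ((a - d : ℚ) : ℝ) = 0 := by push_cast; linarith
      exact_mod_cast this
    have e2 : c + b = 0 := by
      have : ((c + b : ℚ) : ℝ) = 0 := by push_cast; linarith
      exact_mod_cast this
    have hα' : α = (a : ℂ) + c * Complex.I := by
      rw [hα, show d = a by linarith, show b = -c by linarith]; push_cast; ring
    have hr : ((a : ℂ) + (c : ℚ) * Complex.I) ^ n = ε := by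
      rw [map_zero, zero_pow hn0, sub_zero] at h0
      rw [← hα', h0]
    obtain ⟨r1, r2⟩ := gaussian_root hodd hε hr
    refine ⟨?_, by linarith, r2, by linarith⟩
    rcases hε with rfl | rfl <;> simp [r1]

theorem im_pow_conj (x y : ℝ) (n : ℕ) :
    (((x : ℂ) + -(y * Complex.I)) ^ n).im = -(((x : ℂ) + y * Complex.I) ^ n).im := by
  rw [← Complex.conj_im, map_pow]; simp

theorem im_pow_reflect (x y : ℝ) {n : ℕ} (hodd : Odd n) :
    ((-(x : ℂ) + y * Complex.I) ^ n).im = (((x : ℂ) + y * Complex.I) ^ n).im := by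
  rw [show -(x : ℂ) + y * Complex.I = -((x : ℂ) + -(y * Complex.I)) by ring, hodd.neg_pow,
    Complex.neg_im, im_pow_conj, neg_neg]

theorem im_pow_neg (x y : ℝ) {n : ℕ} (hodd : Odd n) :
    ((-(x : ℂ) + -(y * Complex.I)) ^ n).im = -(((x : ℂ) + y * Complex.I) ^ n).im := by
  rw [← neg_add, hodd.neg_pow, Complex.neg_im]


theorem aut_In_odd (n : ℕ) (hn : 3 ≤ n) (hodd : Odd n) :
    ({A : Matrix (Fin 2) (Fin 2) ℚ | ∀ x y : ℝ,
        ((((A 0 0 : ℝ) * x + (A 0 1 : ℝ) * y : ℝ) + ((A 1 0 : ℝ) * x + (A 1 1 : ℝ) * y : ℝ) *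
          Complex.I) ^ n).im = (((x : ℂ) + y * Complex.I) ^ n).im} =
      {!![1, 0; 0, 1], !![-1, 0; 0, 1]}) ∧
    ({A : Matrix (Fin 2) (Fin 2) ℚ |
        (∀ x y : ℝ,
          ((((A 0 0 : ℝ) * x + (A 0 1 : ℝ) * y : ℝ) + ((A 1 0 : ℝ) * x + (A 1 1 : ℝ) * y : ℝ) *
            Complex.I) ^ n).im = (((x : ℂ) + y * Complex.I) ^ n).im) ∨
        (∀ x y : ℝ,
          ((((A 0 0 : ℝ) * x + (A 0 1 : ℝ) * y : ℝ) + ((A 1 0 : ℝ) * x + (A 1 1 : ℝ) * y : ℝ) *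
            Complex.I) ^ n).im = -(((x : ℂ) + y * Complex.I) ^ n).im)} =
      {!![1, 0; 0, 1], !![-1, 0; 0, 1], !![1, 0; 0, -1], !![-1, 0; 0, -1]}) := by
  have ext2 : ∀ {A : Matrix (Fin 2) (Fin 2) ℚ} {p q : ℚ},
      A 0 0 = p → A 0 1 = 0 → A 1 0 = 0 → A 1 1 = q → A = !![p, 0; 0, q] := by
    intro A p q h1 h2 h3 h4
    ext i j; fin_cases i <;> fin_cases j <;> simpa
  constructor
  · ext A
    simp only [Set.mem_ofPred_eq, Set.mem_insert_iff, Set.mem_singleton_iff]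
    constructor
    · intro h
      obtain ⟨h1, h2, h3, h4⟩ := entries_of_invariant (ε := 1) hn hodd (Or.inl rfl)
        (fun x y => by rw [h x y]; simp)
      exact h1.imp (fun h1 => ext2 h1 h2 h3 h4) (fun h1 => ext2 h1 h2 h3 h4)
    · rintro (rfl | rfl) x y
      · simp
      · simpa using im_pow_reflect x y hodd
  · ext A
    simp only [Set.mem_ofPred_eq, Set.mem_insert_iff, Set.mem_singleton_iff]
    constructor
    · rintro (h | h)
      · obtain ⟨h1, h2, h3, h4⟩ := entries_of_invariant (ε := 1) hn hodd (Or.inl rfl)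
          (fun x y => by rw [h x y]; simp)
        rcases h1 with h1 | h1
        · exact Or.inl (ext2 h1 h2 h3 h4)
        · exact Or.inr (Or.inl (ext2 h1 h2 h3 h4))
      · obtain ⟨h1, h2, h3, h4⟩ := entries_of_invariant (ε := -1) hn hodd (Or.inr rfl)
          (fun x y => by rw [h x y]; simp)
        rcases h1 with h1 | h1
        · exact Or.inr (Or.inr (Or.inl (ext2 h1 h2 h3 h4)))
        · exact Or.inr (Or.inr (Or.inr (ext2 h1 h2 h3 h4)))
    · rintro (rfl | rfl | rfl | rfl)
      · exact Or.inl fun x y => by simp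
      · exact Or.inl fun x y => by simpa using im_pow_reflect x y hodd
      · exact Or.inr fun x y => by simpa using im_pow_conj x y n
      · exact Or.inr fun x y => by simpa using im_pow_neg x y hodd
end

section
/- Let n ≥ 4 be an integer divisible by 4. Then the group Aut R_n of rational 2×2 matrices A = [[a,b],[c,d]] such that R_n(ax+by, cx+dy) = R_n(x,y) for all real x, y equals the dihedral group of order 8 generated by [[0,1],[1,0]] and [[0,1],[−1,0]], and it coincides with the group Aut |R_n| of rational 2×2 matrices A with R_n(ax+by, cx+dy) = ±R_n(x,y) for all real x, y. -/
/-!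
Put `P = (a + d) + (c - b) i` and `Q = (a - d) + (c + b) i`, so that
`2 ((a x + b y) + (c x + d y) i) = P w + Q w̄` with `w = x + i y`.  If `R_n ∘ A = ε R_n` with
`ε = ±1`, taking twice the real part gives an identity of binary forms in `w` and `w̄`, namely
`(P w + Q w̄)ⁿ + (Q̄ w + P̄ w̄)ⁿ = 2ⁿ ε (wⁿ + w̄ⁿ)`.  Comparing the coefficients of `w̄ⁿ` and of
`w w̄ⁿ⁻¹` yields
`Qⁿ + P̄ⁿ = 2ⁿ ε` and `P Qⁿ⁻¹ + Q̄ P̄ⁿ⁻¹ = 0` (`coeff_identities`).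

If `P` and `Q` were both nonzero, the second identity would force `|P| = |Q|`; then
`P Q̄⁻¹ = Q P̄⁻¹` turns the second identity into `Qⁿ + P̄ⁿ = 0`, against the first
(`eq_zero_or_eq_zero`).  So `Q = 0` or `P = 0`, and `A` is multiplication by `a + c i`, possibly
after complex conjugation, where `a + c i` is a root of unity in `ℚ(i)`.  Its trace `2a` is a
rational algebraic integer, so `a + c i ∈ {±1, ±i}` (`rat_root_of_unity`), which leaves the eight
matrices of the dihedral group.  Conversely, when `4 ∣ n` those eight substitutions send `wⁿ` to
itself or to its conjugate (`re_pow_eq`), so they all preserve `R_n`, and the sign `-1` never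
occurs.
-/

open Complex Polynomial in
/-- The coefficients of `w̄ⁿ` and `w w̄ⁿ⁻¹`, read off by setting `x = 1` and letting `y = t` be a
variable: the identity extends from real to complex `t`, and `w = 1 + i t` vanishes at `t = i`,
where the value and the derivative are compared. -/
lemma coeff_identities (n : ℕ) (hn : 2 ≤ n) (a b c d ε : ℝ)
    (h : ∀ x y : ℝ, ((((a * x + b * y : ℝ) : ℂ) + (c * x + d * y : ℝ) * I) ^ n).re =
      ε * (((x : ℂ) + y * I) ^ n).re) :
    ((a - d : ℂ) + (c + b) * I) ^ n + ((a + d : ℂ) - (c - b) * I) ^ n = ε * 2 ^ n ∧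
    ((a + d : ℂ) + (c - b) * I) * ((a - d : ℂ) + (c + b) * I) ^ (n - 1) +
      ((a - d : ℂ) - (c + b) * I) * ((a + d : ℂ) - (c - b) * I) ^ (n - 1) = 0 := by
  have key : (C (a + c * I : ℂ) + C (b + d * I : ℂ) * X) ^ n
      + (C (a - c * I : ℂ) + C (b - d * I : ℂ) * X) ^ n
      = C (ε : ℂ) * ((1 + C I * X) ^ n + (1 - C I * X) ^ n) := by
    apply Polynomial.eq_of_infinite_eval_eq
    apply Set.infinite_of_injective_forall_mem Complex.ofReal_injective
    intro t
    have h1 := congrArg (fun r : ℝ => (2 * r : ℂ)) (h 1 t)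
    simp only [Complex.ofReal_mul] at h1
    rw [show ∀ e z : ℂ, 2 * (e * z) = e * (2 * z) by intros; ring,
      Complex.re_eq_add_conj, Complex.re_eq_add_conj] at h1
    simp only [map_pow, map_add, map_mul, Complex.conj_ofReal, Complex.conj_I] at h1
    simp only [Set.mem_ofPred_eq, eval_add, eval_sub, eval_mul, eval_pow, eval_C, eval_X, eval_one]
    push_cast at h1
    rw [mul_div_cancel₀ _ (two_ne_zero), mul_div_cancel₀ _ (two_ne_zero)] at h1
    convert h1 using 2 <;> ring_nf
  have e0 := congrArg (Polynomial.eval I) key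
  have e1 := congrArg (fun p => Polynomial.eval I (derivative p)) key
  obtain ⟨m, rfl⟩ : ∃ m, n = m + 1 + 1 := ⟨n - 2, by omega⟩
  simp only [derivative_add, derivative_sub, derivative_mul, derivative_pow,
    derivative_C, derivative_X, derivative_one, eval_add, eval_sub, eval_mul, eval_pow, eval_C,
    eval_X, eval_one, eval_zero, Nat.add_sub_cancel, I_mul_I, map_natCast, eval_natCast] at e0 e1 ⊢
  have r1 : (a + c * I + (b + d * I) * I : ℂ) = (a - d : ℂ) + (c + b) * I := by
    linear_combination (d : ℂ) * I_mul_I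
  have r2 : (a - c * I + (b - d * I) * I : ℂ) = (a + d : ℂ) - (c - b) * I := by
    linear_combination (-d : ℂ) * I_mul_I
  have r3 : (1 - -1 : ℂ) = 2 := by norm_num
  have r4 : (1 + -1 : ℂ) = 0 := by norm_num
  rw [r1, r2, r3, r4, zero_pow (Nat.succ_ne_zero _), zero_add] at e0
  refine ⟨e0, ?_⟩
  rw [r1, r2, r3, r4] at e1
  have hm : ((m + 1 + 1 : ℕ) : ℂ) ≠ 0 := by exact_mod_cast Nat.succ_ne_zero (m + 1)
  have e2 : (b + d * I : ℂ) * ((a - d : ℂ) + (c + b) * I) ^ (m + 1) +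
      (b - d * I) * ((a + d : ℂ) - (c - b) * I) ^ (m + 1) = -(ε * I * 2 ^ (m + 1)) := by
    apply mul_left_cancel₀ hm
    rw [zero_pow (Nat.succ_ne_zero m)] at e1
    linear_combination e1
  linear_combination e0 - 2 * I * e2 + (2 * d * ((a - d : ℂ) + (c + b) * I) ^ (m + 1) -
    2 * d * ((a + d : ℂ) - (c - b) * I) ^ (m + 1) + 2 * ε * 2 ^ (m + 1)) * I_mul_I

open Complex ComplexConjugate in
/-- If both were nonzero, `h1` forces `|P| = |Q|` (this uses `n ≠ 2`), and then `h1` says `e = 0`. -/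
lemma eq_zero_or_eq_zero (n : ℕ) (hn : 3 ≤ n) (P Q e : ℂ) (he : e ≠ 0)
    (h0 : Q ^ n + conj P ^ n = e) (h1 : P * Q ^ (n - 1) + conj Q * conj P ^ (n - 1) = 0) :
    P = 0 ∨ Q = 0 := by
  by_contra! hne
  obtain ⟨hP, hQ⟩ := hne
  obtain ⟨k, rfl⟩ : ∃ k, n = k + 3 := ⟨n - 3, by omega⟩
  rw [show k + 3 - 1 = k + 2 by omega] at h1
  have hn1 : ‖P‖ * ‖Q‖ ^ (k + 2) = ‖Q‖ * ‖P‖ ^ (k + 2) := by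
    have := congrArg norm (eq_neg_of_add_eq_zero_left h1)
    simpa using this
  have hP' : 0 < ‖P‖ := norm_pos_iff.mpr hP
  have hQ' : 0 < ‖Q‖ := norm_pos_iff.mpr hQ
  have hn2 : ‖Q‖ ^ (k + 1) = ‖P‖ ^ (k + 1) := by
    apply mul_left_cancel₀ (mul_pos hP' hQ').ne'
    linear_combination hn1
  have hn3 : ‖Q‖ = ‖P‖ := (pow_left_inj₀ hQ'.le hP'.le (Nat.succ_ne_zero k)).mp hn2
  have hn4 : Q * conj Q = P * conj P := by
    rw [Complex.mul_conj', Complex.mul_conj', hn3]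
  apply he
  apply mul_left_cancel₀ hP
  rw [← h0, mul_zero]
  linear_combination Q * h1 - conj P ^ (k + 2) * hn4

open Complex in
/-- The roots of unity in `ℚ(i)` are `±1` and `±i`. -/
lemma rat_root_of_unity (n : ℕ) (hn : n ≠ 0) (a c : ℚ)
    (h : ((a : ℂ) + c * I) ^ n = 1) :
    (a = 1 ∧ c = 0) ∨ (a = -1 ∧ c = 0) ∨ (a = 0 ∧ c = 1) ∨ (a = 0 ∧ c = -1) := by
  have hc : ((a : ℂ) - c * I) ^ n = 1 := by
    have := congrArg (starRingEnd ℂ) h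
    simpa [sub_eq_add_neg] using this
  have hint : IsIntegral ℤ (2 * a) := by
    have i1 : IsIntegral ℤ ((a : ℂ) + c * I) :=
      IsIntegral.of_pow (Nat.pos_of_ne_zero hn) (h ▸ isIntegral_one)
    have i2 : IsIntegral ℤ ((a : ℂ) - c * I) :=
      IsIntegral.of_pow (Nat.pos_of_ne_zero hn) (hc ▸ isIntegral_one)
    have i3 : IsIntegral ℤ (algebraMap ℚ ℂ (2 * a)) := by
      have e : algebraMap ℚ ℂ (2 * a) = ((a : ℂ) + c * I) + ((a : ℂ) - c * I) := by
        simp; ring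
      rw [e]
      exact i1.add i2
    exact (isIntegral_algebraMap_iff (algebraMap ℚ ℂ).injective).mp i3
  obtain ⟨m, hm⟩ := IsIntegrallyClosed.isIntegral_iff.mp hint
  have hnorm : a ^ 2 + c ^ 2 = 1 := by
    have h1 : ‖(a : ℂ) + c * I‖ = 1 := Complex.norm_eq_one_of_pow_eq_one h hn
    have h2 : Complex.normSq ((a : ℂ) + c * I) = 1 := by
      rw [Complex.normSq_eq_norm_sq, h1, one_pow]
    have h3 : ((a : ℝ)) ^ 2 + (c : ℝ) ^ 2 = 1 := by
      rw [← h2]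
      simp [Complex.normSq_apply]; ring
    exact_mod_cast h3
  have hm' : (m : ℚ) = 2 * a := by simpa using hm
  have hb : m ^ 2 ≤ 4 := by
    have : (m : ℚ) ^ 2 ≤ 4 := by rw [hm']; nlinarith [sq_nonneg c]
    exact_mod_cast this
  have hm1 : -2 ≤ m := by nlinarith
  have hm2 : m ≤ 2 := by nlinarith
  -- `a = ±1/2` would make `3` the square of the rational `2c`.
  have h3 : ∀ q : ℚ, q ^ 2 ≠ 3 := by
    intro q hq
    have : IsSquare (3 : ℚ) := ⟨q, by rw [← hq]; ring⟩
    revert this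
    decide +kernel
  interval_cases m
  · have : a = -1 := by push_cast at hm'; linarith
    subst this
    have : c = 0 := by nlinarith
    simp [this]
  · have : a = -1/2 := by push_cast at hm'; linarith
    exact absurd (show (2 * c) ^ 2 = 3 by subst this; linarith) (h3 _)
  · have : a = 0 := by push_cast at hm'; linarith
    subst this
    have : c ^ 2 = 1 := by linarith
    rcases (sq_eq_sq_iff_eq_or_eq_neg.mp (this.trans (one_pow 2).symm)) with h | h <;> simp [h]
  · have : a = 1/2 := by push_cast at hm'; linarith
    exact absurd (show (2 * c) ^ 2 = 3 by subst this; linarith) (h3 _)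
  · have : a = 1 := by push_cast at hm'; linarith
    subst this
    have : c = 0 := by nlinarith
    simp [this]

open Complex in
/-- Either sign in the transformation rule leaves only the eight dihedral matrices. -/
lemma mem_dihedral (n : ℕ) (hn : 3 ≤ n) (A : Matrix (Fin 2) (Fin 2) ℚ) (ε : ℝ) (hε : ε ^ 2 = 1)
    (h : ∀ x y : ℝ, ((((A 0 0 : ℝ) * x + (A 0 1 : ℝ) * y : ℝ) +
      ((A 1 0 : ℝ) * x + (A 1 1 : ℝ) * y : ℝ) * Complex.I) ^ n).re =
        ε * (((x : ℂ) + y * Complex.I) ^ n).re) :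
    A ∈ ({!![1, 0; 0, 1], !![-1, 0; 0, -1], !![0, 1; 1, 0], !![0, -1; -1, 0],
        !![0, 1; -1, 0], !![0, -1; 1, 0], !![1, 0; 0, -1], !![-1, 0; 0, 1]} :
          Set (Matrix (Fin 2) (Fin 2) ℚ)) := by
  obtain ⟨h0, h1⟩ := coeff_identities n (by omega) _ _ _ _ ε h
  have hA : A = !![A 0 0, A 0 1; A 1 0, A 1 1] := Matrix.eta_fin_two A
  generalize A 0 0 = a at *
  generalize A 0 1 = b at *
  generalize A 1 0 = c at *
  generalize A 1 1 = d at *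
  simp only [Complex.ofReal_ratCast] at h0 h1
  have hε2 : (ε : ℂ) ^ 2 = 1 := by exact_mod_cast hε
  have hε0 : (ε : ℂ) ≠ 0 := by rintro h; simp [h] at hε2
  have hPQ := eq_zero_or_eq_zero n hn ((a + d : ℂ) + (c - b) * I) ((a - d : ℂ) + (c + b) * I)
    (ε * 2 ^ n) (mul_ne_zero hε0 (pow_ne_zero n two_ne_zero))
    (by simpa [sub_eq_add_neg] using h0) (by simpa [sub_eq_add_neg] using h1)
  have h2n : (2 ^ n : ℂ) ≠ 0 := pow_ne_zero n two_ne_zero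
  have hroot : ∀ a' c' : ℚ, (2 * ((a' : ℂ) + c' * I)) ^ n = ε * 2 ^ n →
      (a' = 1 ∧ c' = 0) ∨ (a' = -1 ∧ c' = 0) ∨ (a' = 0 ∧ c' = 1) ∨ (a' = 0 ∧ c' = -1) := by
    intro a' c' h'
    apply rat_root_of_unity (n * 2) (by omega)
    rw [mul_pow, mul_comm] at h'
    rw [pow_mul, mul_right_cancel₀ h2n h', hε2]
  rcases hPQ with hz | hz
  · have hre := congrArg Complex.re hz
    have him := congrArg Complex.im hz
    simp at hre him
    have hd : d = -a := by have : a + d = 0 := by exact_mod_cast hre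
                           linarith
    have hb : b = c := by have : c - b = 0 := by exact_mod_cast him
                          linarith
    subst hd hb
    rcases hroot a b (by
      rw [← h0]; push_cast; ring_nf
      simp [show n ≠ 0 by omega]) with ⟨rfl, rfl⟩ | ⟨rfl, rfl⟩ | ⟨rfl, rfl⟩ | ⟨rfl, rfl⟩ <;>
      rw [hA] <;> simp
  · have hre := congrArg Complex.re hz
    have him := congrArg Complex.im hz
    simp at hre him
    have hd : d = a := by have : a - d = 0 := by exact_mod_cast hre
                          linarith
    have hb : c = -b := by have : c + b = 0 := by exact_mod_cast him
                           linarith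
    subst hd hb
    rcases hroot d b (by
      rw [← h0]; push_cast; ring_nf
      simp [show n ≠ 0 by omega]) with ⟨rfl, rfl⟩ | ⟨rfl, rfl⟩ | ⟨rfl, rfl⟩ | ⟨rfl, rfl⟩ <;>
      rw [hA] <;> simp

/-- For `4 ∣ n` the real part of `zⁿ` depends only on `z⁴` up to conjugation. -/
lemma re_pow_eq (n : ℕ) (hfour : 4 ∣ n) (z w : ℂ)
    (h : z ^ 4 = w ^ 4 ∨ z ^ 4 = (starRingEnd ℂ) w ^ 4) : (z ^ n).re = (w ^ n).re := by
  obtain ⟨k, rfl⟩ := hfour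
  rw [pow_mul, pow_mul]
  rcases h with h | h
  · rw [h]
  · rw [h, ← map_pow, ← map_pow, Complex.conj_re]


theorem aut_Rn_four_dvd (n : ℕ) (hn : 4 ≤ n) (hfour : 4 ∣ n) :
    ({A : Matrix (Fin 2) (Fin 2) ℚ | ∀ x y : ℝ,
        ((((A 0 0 : ℝ) * x + (A 0 1 : ℝ) * y : ℝ) + ((A 1 0 : ℝ) * x + (A 1 1 : ℝ) * y : ℝ) *
          Complex.I) ^ n).re = (((x : ℂ) + y * Complex.I) ^ n).re} =
      {!![1, 0; 0, 1], !![-1, 0; 0, -1], !![0, 1; 1, 0], !![0, -1; -1, 0],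
        !![0, 1; -1, 0], !![0, -1; 1, 0], !![1, 0; 0, -1], !![-1, 0; 0, 1]}) ∧
    ({A : Matrix (Fin 2) (Fin 2) ℚ | ∀ x y : ℝ,
        ((((A 0 0 : ℝ) * x + (A 0 1 : ℝ) * y : ℝ) + ((A 1 0 : ℝ) * x + (A 1 1 : ℝ) * y : ℝ) *
          Complex.I) ^ n).re = (((x : ℂ) + y * Complex.I) ^ n).re} =
      {A : Matrix (Fin 2) (Fin 2) ℚ |
        (∀ x y : ℝ,
          ((((A 0 0 : ℝ) * x + (A 0 1 : ℝ) * y : ℝ) + ((A 1 0 : ℝ) * x + (A 1 1 : ℝ) * y : ℝ) *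
            Complex.I) ^ n).re = (((x : ℂ) + y * Complex.I) ^ n).re) ∨
        (∀ x y : ℝ,
          ((((A 0 0 : ℝ) * x + (A 0 1 : ℝ) * y : ℝ) + ((A 1 0 : ℝ) * x + (A 1 1 : ℝ) * y : ℝ) *
            Complex.I) ^ n).re = -(((x : ℂ) + y * Complex.I) ^ n).re)}) := by
  have hsub : ∀ A ∈ ({!![1, 0; 0, 1], !![-1, 0; 0, -1], !![0, 1; 1, 0], !![0, -1; -1, 0],
        !![0, 1; -1, 0], !![0, -1; 1, 0], !![1, 0; 0, -1], !![-1, 0; 0, 1]} :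
          Set (Matrix (Fin 2) (Fin 2) ℚ)), ∀ x y : ℝ,
        ((((A 0 0 : ℝ) * x + (A 0 1 : ℝ) * y : ℝ) + ((A 1 0 : ℝ) * x + (A 1 1 : ℝ) * y : ℝ) *
          Complex.I) ^ n).re = (((x : ℂ) + y * Complex.I) ^ n).re := by
    intro A hA x y
    apply re_pow_eq n hfour
    have hI := Complex.I_sq
    have hI3 : Complex.I ^ 3 = -Complex.I := Complex.I_pow_three
    have hI4 := Complex.I_pow_four
    simp only [Set.mem_insert_iff, Set.mem_singleton_iff] at hA
    rcases hA with rfl | rfl | rfl | rfl | rfl | rfl | rfl | rfl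
    · left; simp
    · left; simp; ring
    · right; simp; ring_nf; simp only [hI, hI3, hI4]; ring
    · right; simp; ring_nf; simp only [hI, hI3, hI4]; ring
    · left; simp; ring_nf; simp only [hI, hI3, hI4]; ring
    · left; simp; ring_nf; simp only [hI, hI3, hI4]; ring
    · right; simp
    · right; simp; ring
  refine ⟨Set.Subset.antisymm ?_ hsub, Set.Subset.antisymm (fun A hA => Or.inl hA) ?_⟩
  · intro A hA
    exact mem_dihedral n (by omega) A 1 (by norm_num) (by simpa using hA)
  · rintro A (hA | hA)
    · exact hA
    · exact hsub A (mem_dihedral n (by omega) A (-1) (by norm_num) (by simpa using hA))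
end

section
/- Let n be a positive integer and k an integer not divisible by n. If cot(kπ/n) is a rational number, then cot(kπ/n) ∈ {−1, 0, 1}. -/
/-!
If `c = cot θ` is rational, then so is `cos (2θ) = (c² - 1) / (c² + 1) = 1 - 2 / (c² + 1)`.
As `2θ` is a rational multiple of `π`, Niven's theorem gives
`cos (2θ) ∈ {-1, -1/2, 0, 1/2, 1}`. The value `1` would need `2 / (c² + 1) = 0`, and the others
give `c² = 0, 1/3, 1, 3` respectively; `1/3` and `3` are excluded by the irrationality of `√3`.
-/

/-- The irrationality of `√3`, in a form that applies directly to rational numbers. -/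
lemma rat_sq_ne_three (q : ℚ) : q ^ 2 ≠ 3 := by
  intro h
  have hirr : Irrational √(3 : ℝ) := by
    simpa using Nat.Prime.irrational_sqrt Nat.prime_three
  refine hirr ⟨|q|, ?_⟩
  have hq : (q : ℝ) ^ 2 = 3 := by exact_mod_cast h
  rw [← hq, Real.sqrt_sq_eq_abs, Rat.cast_abs]

theorem cot_rational_values (n : ℕ) (hn : 0 < n) (k : ℤ) (hk : ¬ ((n : ℤ) ∣ k))
    (hrat : ∃ q : ℚ, Real.cos (k * Real.pi / n) / Real.sin (k * Real.pi / n) = (q : ℝ)) :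
    Real.cos (k * Real.pi / n) / Real.sin (k * Real.pi / n) = -1 ∨
    Real.cos (k * Real.pi / n) / Real.sin (k * Real.pi / n) = 0 ∨
    Real.cos (k * Real.pi / n) / Real.sin (k * Real.pi / n) = 1 := by
  obtain ⟨q, hq⟩ := hrat
  have hθ : ∃ r : ℚ, 2 * ((k : ℝ) * Real.pi / n) = r * Real.pi :=
    ⟨2 * k / n, by push_cast; ring⟩
  generalize (k : ℝ) * Real.pi / n = θ at *
  by_cases hs : Real.sin θ = 0
  -- With a vanishing sine the quotient takes the junk value `0`, which is in the list.
  · simp [hs]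
  have hc : Real.cos θ = q * Real.sin θ := by rw [← hq]; field_simp
  have hpos : (0 : ℝ) < (q : ℝ) ^ 2 + 1 := by positivity
  have h2 : Real.cos (2 * θ) = 1 - 2 / ((q : ℝ) ^ 2 + 1) := by
    have h1 := Real.sin_sq_add_cos_sq θ
    rw [hc] at h1
    rw [Real.cos_two_mul, hc]
    field_simp
    linear_combination 2 * (q : ℝ) ^ 2 * h1
  have key := niven hθ ⟨1 - 2 / (q ^ 2 + 1), by rw [h2]; push_cast; rfl⟩
  rw [h2] at key
  simp only [Set.mem_insert_iff, Set.mem_singleton_iff] at key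
  rw [hq]
  rcases key with h | h | h | h | h <;> field_simp at h
  · have : (q : ℝ) ^ 2 = 0 := by linarith
    exact Or.inr (Or.inl (pow_eq_zero_iff two_ne_zero |>.mp this))
  · exfalso
    have h3 : (3 * (q : ℝ)) ^ 2 = 3 := by linarith
    exact rat_sq_ne_three (3 * q) (by exact_mod_cast h3)
  · have : (q : ℝ) ^ 2 = 1 := by linarith
    rcases sq_eq_sq_iff_eq_or_eq_neg.mp (this.trans (one_pow 2).symm) with h | h <;> simp [h]
  · exfalso
    have h3 : (q : ℝ) ^ 2 = 3 := by linarith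
    exact rat_sq_ne_three q (by exact_mod_cast h3)
  · linarith
end
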